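/- Let A be a C*-algebra, S a set, and K : S × S → A an A-positive definite kernel. For all n, m : ℕ, s : Fin n → S, t : Fin m → S, a : Fin n → A, b : Fin m → A, writing X = ∑_{i,k} (a i)⋆ * K(s i, t k) * (b k), one has the Schwarz inequality X⋆ * X ≤ ‖∑_{i,j} (a i)⋆ * K(s i, s j) * (a j)‖ • (∑_{k,l} (b k)⋆ * K(t k, t l) * (b l)) in A. -/

import Mathlib

/-!
Extending `K` to an `A`-valued form `⟪·, ·⟫` on the right `A`-module `S →₀ A` of finitely supported
families makes the claim the Cauchy–Schwarz inequality `⟪x, y⟫⋆ ⟪x, y⟫ ≤ ‖⟪x, x⟫‖ ⟪y, y⟫`.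
Positivity forces the form to be Hermitian, by polarization. For `X = ⟪x, y⟫` and `r ≥ ‖⟪x, x⟫‖`,
positivity at `x X - r y` and `X⋆ ⟪x, x⟫ X ≤ r X⋆ X` give `r X⋆ X ≤ r² ⟪y, y⟫`. Cancelling `r > 0`
and letting `r` decrease to `‖⟪x, x⟫‖` also covers the case `⟪x, x⟫ = 0`.
-/

open Finsupp
open scoped RightActions

theorem le_smul_of_forall_gt {𝕜 M : Type*} [TopologicalSpace 𝕜] [LinearOrder 𝕜] [OrderTopology 𝕜]
    [DenselyOrdered 𝕜] [NoMaxOrder 𝕜] [TopologicalSpace M] [Preorder M] [ClosedIciTopology M]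
    [SMul 𝕜 M] [ContinuousSMul 𝕜 M] {c : 𝕜} {a b : M} (h : ∀ r > c, a ≤ r • b) : a ≤ c • b :=
  have hcont : Continuous fun r : 𝕜 => r • b := by fun_prop
  ge_of_tendsto (hcont.continuousWithinAt (s := Set.Ioi c)) (eventually_mem_nhdsWithin.mono h)

theorem exists_fin_sum_single_eq {S M : Type*} [AddCommMonoid M] (f : S →₀ M) :
    ∃ (n : ℕ) (s : Fin n → S) (a : Fin n → M), ∑ i, single (s i) (a i) = f := by
  let e := f.support.equivFin.symm
  refine ⟨f.support.card, fun i => e i, fun i => f (e i), ?_⟩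
  rw [e.sum_comp fun s : f.support => single (s : S) (f s),
    Finset.sum_coe_sort f.support fun s => single s (f s)]
  exact f.sum_single

section Sesquilinear

variable {E A : Type*} [AddCommGroup E] [Module ℂ E]

theorem star_apply_eq_apply_swap [AddCommGroup A] [StarAddMonoid A] [Module ℂ A] [StarModule ℂ A]
    {B : E →ₗ⋆[ℂ] E →ₗ[ℂ] A} (hB : ∀ x, IsSelfAdjoint (B x x)) (x y : E) :
    star (B x y) = B y x := by
  have cross_terms (z : ℂ) :
      star z • star (B x y) + z • star (B y x) = z • B x y + star z • B y x := by
    have hexp : B (x + z • y) (x + z • y) - (B x x + B (z • y) (z • y)) =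
        z • B x y + star z • B y x := by
      simp only [map_add, LinearMap.add_apply, map_smul, LinearMap.map_smulₛₗ,
        LinearMap.smul_apply, starRingEnd_apply]
      module
    have h := ((hB (x + z • y)).sub ((hB x).add (hB (z • y)))).star_eq
    simpa only [hexp, star_add, star_smul, star_star] using h
  have h_add : star (B x y) + star (B y x) = B x y + B y x := by simpa using cross_terms 1
  have h_sub : star (B x y) - star (B y x) = B y x - B x y := by
    simpa [smul_smul, smul_sub, neg_add_eq_sub, ← sub_eq_add_neg] using
      congrArg (Complex.I • ·) (cross_terms Complex.I)
  linear_combination (norm := module) (2⁻¹ : ℂ) • h_add + (2⁻¹ : ℂ) • h_sub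

variable [SMul Aᵐᵒᵖ E]

theorem apply_op_smul_left [NonUnitalRing A] [StarRing A] [Module ℂ A] [StarModule ℂ A]
    {B : E →ₗ⋆[ℂ] E →ₗ[ℂ] A} (hB : ∀ x, IsSelfAdjoint (B x x))
    (hBmul : ∀ x y a, B x (y <• a) = B x y * a) (x y : E) (a : A) :
    B (x <• a) y = star a * B x y := by
  rw [← star_apply_eq_apply_swap hB y, hBmul, star_mul, star_apply_eq_apply_swap hB]

variable [NonUnitalCStarAlgebra A] [PartialOrder A] [StarOrderedRing A] {B : E →ₗ⋆[ℂ] E →ₗ[ℂ] A}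

theorem star_apply_mul_apply_le_smul_of_norm_le (hB : ∀ x, 0 ≤ B x x)
    (hBmul : ∀ x y a, B x (y <• a) = B x y * a) {r : ℝ} (hr : 0 < r) {x : E} (hx : ‖B x x‖ ≤ r)
    (y : E) : star (B x y) * B x y ≤ r • B y y := by
  have hsa (x) : IsSelfAdjoint (B x x) := (hB x).isSelfAdjoint
  set X := B x y
  have hswap : B y x = star X := (star_apply_eq_apply_swap hsa x y).symm
  have conj_le : star X * B x x * X ≤ r • (star X * X) :=
    (CStarAlgebra.star_left_conjugate_le_norm_smul (hsa x)).trans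
      (smul_le_smul_of_nonneg_right hx (star_mul_self_nonneg X))
  rw [← smul_le_smul_iff_of_pos_left hr, ← sub_nonneg]
  calc
    0 ≤ B (x <• X - (r : ℂ) • y) (x <• X - (r : ℂ) • y) := hB _
    _ = star X * B x x * X - (2 * r) • (star X * X) + r ^ 2 • B y y := by
      simp only [map_sub, LinearMap.sub_apply, map_smul, LinearMap.map_smulₛₗ,
        LinearMap.smul_apply, hBmul, apply_op_smul_left hsa hBmul, Complex.conj_ofReal,
        Complex.coe_smul (E := A), hswap, mul_assoc]
      module
    _ ≤ r • (star X * X) - (2 * r) • (star X * X) + r ^ 2 • B y y := by gcongr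
    _ = r • r • B y y - r • (star X * X) := by module

theorem star_apply_mul_apply_le_norm_smul (hB : ∀ x, 0 ≤ B x x)
    (hBmul : ∀ x y a, B x (y <• a) = B x y * a) (x y : E) :
    star (B x y) * B x y ≤ ‖B x x‖ • B y y :=
  le_smul_of_forall_gt fun _ hr =>
    star_apply_mul_apply_le_smul_of_norm_le hB hBmul ((norm_nonneg _).trans_lt hr) hr.le y

end Sesquilinear

section KernelForm

variable {S A : Type*} [NonUnitalSemiring A] [StarRing A]

/-- `A`-positive definiteness of a kernel `K`, with points of `S` allowed to repeat in `s`. -/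
def IsPositiveDefiniteKernel [LE A] (K : S × S → A) : Prop :=
  ∀ (n : ℕ) (s : Fin n → S) (a : Fin n → A), 0 ≤ ∑ i, ∑ j, star (a i) * K (s i, s j) * a j

variable (R : Type*) [CommSemiring R] [StarRing R] [Module R A] [StarModule R A]
  [IsScalarTower R A A] [SMulCommClass R A A]

/-- The `A`-valued sesquilinear form `⟪f, g⟫ = ∑ s, ∑ t, (f s)⋆ * K (s, t) * g t` on finitely
supported families that a kernel `K` induces. -/
noncomputable def kernelForm (K : S × S → A) : (S →₀ A) →ₗ⋆[R] (S →₀ A) →ₗ[R] A :=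
  LinearMap.mk₂'ₛₗ (starRingEnd R) (RingHom.id R)
    (fun f g => f.sum fun s a => g.sum fun t b => star a * K (s, t) * b)
    (fun f f' g => sum_add_index' (by simp) (by simp [add_mul, sum_add]))
    (fun c f g => by
      rw [sum_smul_index' (by simp)]
      simp only [star_smul, smul_mul_assoc, smul_sum, starRingEnd_apply])
    (fun f g g' => by
      rw [← sum_add]
      congr! 3 with s a
      exact sum_add_index' (by simp) (by simp [mul_add]))
    (fun c f g => by
      simp only [RingHom.id_apply, smul_sum]
      congr! 3 with s a
      rw [sum_smul_index' (by simp)]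
      simp only [mul_smul_comm])

theorem kernelForm_apply (K : S × S → A) (f g : S →₀ A) :
    kernelForm R K f g = f.sum fun s a => g.sum fun t b => star a * K (s, t) * b :=
  rfl

theorem kernelForm_op_smul_right (K : S × S → A) (f g : S →₀ A) (a : A) :
    kernelForm R K f (g <• a) = kernelForm R K f g * a := by
  simp only [kernelForm_apply, Finsupp.sum_mul]
  congr! 3 with s b
  rw [sum_smul_index' (by simp)]
  simp only [MulOpposite.smul_eq_mul_unop, MulOpposite.unop_op, mul_assoc]

theorem kernelForm_sum_single {ι κ : Type*} [Fintype ι] [Fintype κ] (K : S × S → A)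
    (s : ι → S) (t : κ → S) (a : ι → A) (b : κ → A) :
    kernelForm R K (∑ i, single (s i) (a i)) (∑ k, single (t k) (b k)) =
      ∑ i, ∑ k, star (a i) * K (s i, t k) * b k := by
  simp only [map_sum, LinearMap.sum_apply]
  rw [Finset.sum_comm]
  simp [kernelForm_apply]

theorem IsPositiveDefiniteKernel.kernelForm_self_nonneg [LE A] {K : S × S → A}
    (hK : IsPositiveDefiniteKernel K) (f : S →₀ A) : 0 ≤ kernelForm R K f f := by
  obtain ⟨n, s, a, rfl⟩ := exists_fin_sum_single_eq f
  rw [kernelForm_sum_single]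
  exact hK n s a

end KernelForm

/-- The Schwarz inequality for an `A`-positive definite kernel:
`X⋆ * X ≤ ‖∑ (a i)⋆ K(s i, s j) (a j)‖ • (∑ (b k)⋆ K(t k, t l) (b l))`
where `X = ∑ (a i)⋆ K(s i, t k) (b k)`. -/
theorem kernel_schwarz_inequality
    {A : Type*} [NonUnitalCStarAlgebra A] [PartialOrder A] [StarOrderedRing A]
    {S : Type*} (K : S × S → A)
    (hK : ∀ (n : ℕ) (s : Fin n → S) (a : Fin n → A),
      0 ≤ ∑ i, ∑ j, star (a i) * K (s i, s j) * a j) :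
    ∀ (n m : ℕ) (s : Fin n → S) (t : Fin m → S) (a : Fin n → A) (b : Fin m → A),
      star (∑ i, ∑ k, star (a i) * K (s i, t k) * b k) *
          (∑ i, ∑ k, star (a i) * K (s i, t k) * b k) ≤
        ‖∑ i, ∑ j, star (a i) * K (s i, s j) * a j‖ •
          ∑ k, ∑ l, star (b k) * K (t k, t l) * b l := by
  intro n m s t a b
  have hpos : IsPositiveDefiniteKernel K := hK
  simpa only [kernelForm_sum_single] using
    star_apply_mul_apply_le_norm_smul (hpos.kernelForm_self_nonneg ℂ) (kernelForm_op_smul_right ℂ K)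
      (∑ i, single (s i) (a i)) (∑ k, single (t k) (b k))
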